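/- Let V(n; i, j) denote the number of pairs (π₁, π₂) where π₁ is a partition into exactly i distinct positive integer parts (a-parts), π₂ is a partition into exactly j distinct positive integer parts (b-parts), and the combined sum of all parts is n. Let S(n; r, s, t) denote the number of Type-1 partitions of n having exactly r parts of color a, s parts of color b, and t parts of color ab. Then V(n; i, j) = \sum_{r+t=i, s+t=j} S(n; r, s, t). -/

import Mathlib

/-- The three colors `a`, `b`, `ab` of the Alladi–Gordon weighted words. -/
inductive PColor | a | b | ab
deriving DecidableEq

/-- A colored part: a color together with a subscript (the integer being colored). -/
abbrev CPart := PColor × ℕ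

/-- A Type-1 partition: a list of valid colored symbols (`a_m, b_m` for `m ≥ 1`,
`ab_m` for `m ≥ 2`) whose subscripts decrease with gap `≥ 1` between consecutive
symbols, the gap being `≥ 2` when the larger symbol has color `ab`, or the larger
symbol has color `a` and the smaller one has color `b`.  (A gap `≥ 1` in subscripts
already forces the symbols to be strictly decreasing in the total order
`a_1 < b_1 < ab_2 < a_2 < b_2 < ab_3 < a_3 < b_3 < ⋯`.) -/
def IsType1 (π : List CPart) : Prop :=
  (∀ p ∈ π, 1 ≤ p.2 ∧ (p.1 = PColor.ab → 2 ≤ p.2)) ∧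
  π.Chain' (fun x y => y.2 + 1 ≤ x.2 ∧
    ((x.1 = PColor.ab ∨ (x.1 = PColor.a ∧ y.1 = PColor.b)) → y.2 + 2 ≤ x.2))

/-- Number of parts of a given color. -/
def colorCount (c : PColor) (π : List CPart) : ℕ := (π.filter (fun p => p.1 = c)).length

/-- The sum of the subscripts (the number being partitioned). -/
def wt (π : List CPart) : ℕ := (π.map Prod.snd).sum

/-- `V n i j`: the number of vector partitions `(π₁, π₂)` of `n` where `π₁` has exactly
`i` distinct (positive integer) a-parts and `π₂` has exactly `j` distinct b-parts. -/
noncomputable def V (n i j : ℕ) : ℕ :=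
  {p : List ℕ × List ℕ | p.1.Chain' (· > ·) ∧ p.2.Chain' (· > ·) ∧
    (∀ x ∈ p.1, 0 < x) ∧ (∀ x ∈ p.2, 0 < x) ∧
    p.1.length = i ∧ p.2.length = j ∧ p.1.sum + p.2.sum = n}.ncard

/-- `S n r s t`: the number of Type-1 partitions of `n` with exactly `r` a-parts,
`s` b-parts and `t` ab-parts. -/
noncomputable def S (n r s t : ℕ) : ℕ :=
  {π : List CPart | IsType1 π ∧ colorCount PColor.a π = r ∧ colorCount PColor.b π = s ∧
    colorCount PColor.ab π = t ∧ wt π = n}.ncard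

namespace AG

open PowerSeries

/-! ### Generating functions of weighted sets -/

/-- Generating function of a weighted set. -/
noncomputable def gf {α : Type*} (w : α → ℕ) (A : Set α) : PowerSeries ℤ :=
  PowerSeries.mk fun n => (({x | x ∈ A ∧ w x = n}.ncard : ℕ) : ℤ)

/-- Every weight class is finite. -/
def LF {α : Type*} (w : α → ℕ) (A : Set α) : Prop := ∀ n, {x | x ∈ A ∧ w x = n}.Finite

theorem LF.mono {α : Type*} {w : α → ℕ} {A B : Set α} (h : LF w B) (hAB : A ⊆ B) : LF w A :=
  fun n => (h n).subset fun _ hx => ⟨hAB hx.1, hx.2⟩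

theorem gf_union {α : Type*} {w : α → ℕ} {A B : Set α} (hA : LF w A) (hB : LF w B)
    (hd : ∀ x ∈ A, x ∉ B) : gf w (A ∪ B) = gf w A + gf w B := by
  ext n
  simp only [gf, coeff_mk, map_add]
  rw [← Nat.cast_add, ← Set.ncard_union_eq _ (hA n) (hB n)]
  · congr 2
    ext x
    simp only [Set.mem_union, Set.mem_ofPred_eq]
    tauto
  · rw [Set.disjoint_left]
    rintro x ⟨h1, _⟩ ⟨h2, _⟩
    exact hd x h1 h2

theorem gf_image {α β : Type*} {w : α → ℕ} {w' : β → ℕ} {A : Set α} (f : α → β) (k : ℕ)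
    (hf : Function.Injective f) (hw : ∀ x ∈ A, w' (f x) = w x + k) :
    gf w' (f '' A) = X ^ k * gf w A := by
  ext n
  rw [coeff_X_pow_mul']
  simp only [gf, coeff_mk]
  split_ifs with h
  · rw [← Set.ncard_image_of_injective _ hf]
    congr 2
    ext y
    constructor
    · rintro ⟨⟨x, hx, rfl⟩, h2⟩
      refine ⟨x, ⟨hx, ?_⟩, rfl⟩
      have := hw x hx
      omega
    · rintro ⟨x, ⟨hx, h2⟩, rfl⟩
      refine ⟨⟨x, hx, rfl⟩, ?_⟩
      have := hw x hx
      omega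
  · have : {x | x ∈ f '' A ∧ w' x = n} = ∅ := by
      ext y
      simp only [Set.mem_ofPred_eq, Set.mem_empty_iff_false, iff_false]
      rintro ⟨⟨x, hx, rfl⟩, h2⟩
      have := hw x hx
      omega
    rw [this]; simp

theorem gf_empty {α : Type*} (w : α → ℕ) : gf w (∅ : Set α) = 0 := by
  ext n; simp [gf]

theorem gf_prod {α β : Type*} {w : α → ℕ} {w' : β → ℕ} {A : Set α} {B : Set β}
    (hA : LF w A) (hB : LF w' B) :
    gf (fun p : α × β => w p.1 + w' p.2) (A ×ˢ B) = gf w A * gf w' B := by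
  classical
  ext n
  rw [coeff_mul]
  simp only [gf, coeff_mk]
  have key : {x : α × β | x ∈ A ×ˢ B ∧ w x.1 + w' x.2 = n} =
      ((Finset.HasAntidiagonal.antidiagonal n).biUnion fun p =>
        (hA p.1).toFinset ×ˢ (hB p.2).toFinset : Finset (α × β)) := by
    ext ⟨x, y⟩
    simp only [Set.mem_ofPred_eq, Set.mem_prod, Finset.coe_biUnion, Set.mem_iUnion,
      Finset.mem_coe, Finset.mem_product, Set.Finite.mem_toFinset,
      Finset.HasAntidiagonal.mem_antidiagonal]
    constructor
    · rintro ⟨⟨h1, h2⟩, h3⟩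
      exact ⟨(w x, w' y), h3, ⟨h1, rfl⟩, ⟨h2, rfl⟩⟩
    · rintro ⟨⟨a, b⟩, h, ⟨h1, rfl⟩, ⟨h2, rfl⟩⟩
      exact ⟨⟨h1, h2⟩, h⟩
  rw [key, Set.ncard_coe_finset, Finset.card_biUnion]
  · push_cast
    refine Finset.sum_congr rfl fun p _ => ?_
    rw [Finset.card_product, Set.ncard_eq_toFinset_card _ (hA p.1),
      Set.ncard_eq_toFinset_card _ (hB p.2)]
    push_cast
    rfl
  · rintro ⟨a, b⟩ _ ⟨c, d⟩ _ hne
    simp only [Function.onFun]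
    rw [Finset.disjoint_left]
    rintro ⟨x, y⟩ h1 h2
    simp only [Finset.mem_product, Set.Finite.mem_toFinset, Set.mem_ofPred_eq] at h1 h2
    apply hne
    rw [← h1.1.2, ← h1.2.2, ← h2.1.2, ← h2.2.2]

/-! ### Structure of Type-1 partitions -/

/-- Add one to every subscript. -/
def shift (π : List CPart) : List CPart := π.map fun p => (p.1, p.2 + 1)

theorem shift_inj : Function.Injective shift := by
  apply List.map_injective_iff.2
  rintro ⟨a, b⟩ ⟨c, d⟩ h
  simpa using h

theorem colorCount_shift (c : PColor) (π : List CPart) :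
    colorCount c (shift π) = colorCount c π := by
  simp only [colorCount, shift, List.filter_map, List.length_map]
  rfl

theorem colorCount_concat (c : PColor) (π : List CPart) (x : CPart) :
    colorCount c (π ++ [x]) = colorCount c π + if x.1 = c then 1 else 0 := by
  simp only [colorCount, List.filter_append, List.length_append]
  split_ifs with h <;> simp [List.filter_cons, h]

theorem length_eq (π : List CPart) : π.length =
    colorCount PColor.a π + colorCount PColor.b π + colorCount PColor.ab π := by
  induction π with
  | nil => rfl
  | cons x l ih =>
    obtain ⟨c, m⟩ := x
    cases c <;> simp [colorCount, List.filter_cons] at ih ⊢ <;> omega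

theorem wt_shift (π : List CPart) : wt (shift π) = wt π + π.length := by
  induction π with
  | nil => rfl
  | cons x l ih => simp [wt, shift] at ih ⊢; omega

theorem wt_concat (π : List CPart) (x : CPart) : wt (π ++ [x]) = wt π + x.2 := by
  simp [wt]

theorem length_shift (π : List CPart) : (shift π).length = π.length := by simp [shift]

/-- Validity of a single symbol. -/
def Val (p : CPart) : Prop := 1 ≤ p.2 ∧ (p.1 = PColor.ab → 2 ≤ p.2)

/-- Gap condition. -/
def R (x y : CPart) : Prop := y.2 + 1 ≤ x.2 ∧
    ((x.1 = PColor.ab ∨ (x.1 = PColor.a ∧ y.1 = PColor.b)) → y.2 + 2 ≤ x.2)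

theorem isType1_iff (π : List CPart) :
    IsType1 π ↔ (∀ p ∈ π, Val p) ∧ List.IsChain R π := Iff.rfl

theorem isType1_nil : IsType1 [] := by simp [isType1_iff]

theorem isType1_concat (π : List CPart) (x : CPart) :
    IsType1 (π ++ [x]) ↔ IsType1 π ∧ Val x ∧ ∀ y ∈ π.getLast?, R y x := by
  simp only [isType1_iff, List.isChain_append, List.mem_append, List.mem_singleton]
  constructor
  · rintro ⟨h1, h2, h3, h4⟩
    exact ⟨⟨fun p hp => h1 p (Or.inl hp), h2⟩, h1 x (Or.inr rfl), fun y hy => h4 y hy x (by simp)⟩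
  · rintro ⟨⟨h1, h2⟩, h3, h4⟩
    refine ⟨?_, h2, List.isChain_singleton _, ?_⟩
    · rintro p (hp | rfl)
      · exact h1 p hp
      · exact h3
    · intro y hy z hz
      simp at hz
      subst hz
      exact h4 y hy

theorem isType1_shift {π : List CPart} (h : IsType1 π) : IsType1 (shift π) := by
  rw [isType1_iff] at h ⊢
  refine ⟨?_, ?_⟩
  · intro p hp
    simp only [shift, List.mem_map] at hp
    obtain ⟨q, hq, rfl⟩ := hp
    have := h.1 q hq
    simp only [Val] at this ⊢
    exact ⟨by omega, fun h => by have := this.2 h; omega⟩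
  · rw [shift, List.isChain_map]
    refine h.2.imp ?_
    intro x y hxy
    simp only [R] at hxy ⊢
    exact ⟨by omega, fun h => by have := hxy.2 h; omega⟩

/-- A symbol that stays valid after subtracting one. -/
def Val2 (p : CPart) : Prop := 2 ≤ p.2 ∧ (p.1 = PColor.ab → 3 ≤ p.2)

theorem exists_shift {π : List CPart} (h : IsType1 π) (hl : ∀ y ∈ π.getLast?, Val2 y) :
    ∃ ρ, IsType1 ρ ∧ shift ρ = π := by
  have hall : ∀ y ∈ π, Val2 y := by
    rw [isType1_iff] at h
    replace h := h.2
    induction π with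
    | nil => simp
    | cons x l ih =>
      cases l with
      | nil => simpa using hl
      | cons z l =>
        rw [List.isChain_cons_cons] at h
        have h2 := ih (by simpa using hl) h.2
        intro y hy
        rcases List.mem_cons.1 hy with rfl | hy
        · have h3 := h2 z (by simp)
          have h4 := h.1
          simp only [Val2, R] at h3 h4 ⊢
          exact ⟨by omega, fun h => by have := h4.2 (Or.inl h); omega⟩
        · exact h2 y hy
  have hs : shift (π.map fun p => (p.1, p.2 - 1)) = π := by
    rw [shift, List.map_map]
    conv_rhs => rw [← List.map_id π]
    apply List.map_congr_left
    rintro ⟨c, m⟩ hp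
    have := (hall _ hp).1
    simp at this ⊢
    omega
  refine ⟨_, ?_, hs⟩
  generalize (π.map fun p => (p.1, p.2 - 1)) = ρ at hs
  subst hs
  rw [isType1_iff] at h ⊢
  constructor
  · intro p hp
    have := hall (p.1, p.2 + 1) (List.mem_map.2 ⟨p, hp, rfl⟩)
    simp only [Val2, Val] at this ⊢
    exact ⟨by omega, fun h => by have := this.2 h; omega⟩
  · have h2 := h.2
    rw [shift, List.isChain_map] at h2
    refine h2.imp ?_
    intro x y hxy
    simp only [R] at hxy ⊢
    exact ⟨by omega, fun h => by have := hxy.2 h; omega⟩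

theorem mem_getLast_shift {π : List CPart} {y : CPart} (hy : y ∈ (shift π).getLast?) :
    ∃ z ∈ π.getLast?, y = (z.1, z.2 + 1) := by
  simp only [shift, List.getLast?_map, Option.mem_def, Option.map_eq_some_iff] at hy ⊢
  obtain ⟨z, hz, rfl⟩ := hy
  exact ⟨z, hz, rfl⟩

theorem getLast_shift {π : List CPart} {z : CPart} (hz : z ∈ π.getLast?) :
    (z.1, z.2 + 1) ∈ (shift π).getLast? := by
  simp only [shift, List.getLast?_map, Option.mem_def, Option.map_eq_some_iff] at hz ⊢
  exact ⟨z, hz, rfl⟩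

theorem val_last {π : List CPart} (h : IsType1 π) {y : CPart} (hy : y ∈ π.getLast?) : Val y :=
  h.1 y (List.mem_of_getLast? hy)

/-- Type-1 partitions with given color counts. -/
def TT (r s t : ℕ) : Set (List CPart) :=
  {π | IsType1 π ∧ colorCount PColor.a π = r ∧ colorCount PColor.b π = s ∧
    colorCount PColor.ab π = t}

/-- Those with a given smallest symbol. -/
def E (x : CPart) (r s t : ℕ) : Set (List CPart) :=
  {π | π ∈ TT r s t ∧ x ∈ π.getLast?}

theorem finite_lists (k n : ℕ) :
    {l : List CPart | l.length = k ∧ ∀ p ∈ l, p.2 ≤ n}.Finite := by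
  induction k with
  | zero =>
    refine (Set.finite_singleton []).subset ?_
    rintro l ⟨h, _⟩
    simpa using h
  | succ k ih =>
    have hf : {p : CPart | p.2 ≤ n}.Finite := by
      have h1 : (Set.univ : Set PColor).Finite := by
        refine (Set.toFinite {PColor.a, PColor.b, PColor.ab}).subset ?_
        intro c _
        cases c <;> simp
      refine (h1.prod (Set.finite_Iic n)).subset ?_
      intro p hp
      exact ⟨trivial, hp⟩
    refine (hf.image2 List.cons ih).subset ?_
    rintro l ⟨h, h2⟩
    cases l with
    | nil => simp at h
    | cons x l =>
      refine ⟨x, h2 x (by simp), l, ⟨by simpa using h, fun p hp => h2 p (by simp [hp])⟩, rfl⟩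

theorem lf_TT (r s t : ℕ) : LF wt (TT r s t) := by
  intro n
  refine (finite_lists (r + s + t) n).subset ?_
  rintro l ⟨⟨_, h1, h2, h3⟩, h4⟩
  refine ⟨by rw [length_eq, h1, h2, h3], fun p hp => ?_⟩
  rw [← h4]
  exact List.single_le_sum (by simp) _ (List.mem_map.2 ⟨p, hp, rfl⟩)

theorem lf_E (x : CPart) (r s t : ℕ) : LF wt (E x r s t) := (lf_TT r s t).mono fun _ h => h.1

theorem mem_TT_shift {r s t : ℕ} {ρ : List CPart} (h : IsType1 ρ) :
    shift ρ ∈ TT r s t ↔ ρ ∈ TT r s t := by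
  simp only [TT, Set.mem_ofPred_eq, colorCount_shift, h, isType1_shift h, true_and]

theorem length_TT {r s t : ℕ} {ρ : List CPart} (h : ρ ∈ TT r s t) : ρ.length = r + s + t := by
  rw [length_eq, h.2.1, h.2.2.1, h.2.2.2]

theorem gf_shift (r s t : ℕ) : gf wt (shift '' TT r s t) = X ^ (r + s + t) * gf wt (TT r s t) :=
  gf_image _ _ shift_inj fun x hx => by rw [wt_shift, length_TT hx]

theorem TT_decomp (r s t : ℕ) : TT r s t = ((shift '' TT r s t ∪ E (PColor.a, 1) r s t) ∪
    E (PColor.b, 1) r s t) ∪ E (PColor.ab, 2) r s t := by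
  ext π
  constructor
  · intro h
    by_cases hl : ∀ y ∈ π.getLast?, Val2 y
    · obtain ⟨ρ, h1, rfl⟩ := exists_shift h.1 hl
      exact Or.inl (Or.inl (Or.inl ⟨ρ, (mem_TT_shift h1).1 h, rfl⟩))
    · push Not at hl
      obtain ⟨⟨c, m⟩, hy, hv⟩ := hl
      have hv2 := val_last h.1 hy
      simp only [Val, Val2] at hv hv2
      cases c
      · have : m = 1 := by simp at hv; omega
        subst this
        exact Or.inl (Or.inl (Or.inr ⟨h, hy⟩))
      · have : m = 1 := by simp at hv; omega
        subst this
        exact Or.inl (Or.inr ⟨h, hy⟩)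
      · have : m = 2 := by simp at hv hv2; omega
        subst this
        exact Or.inr ⟨h, hy⟩
  · rintro (((⟨ρ, h, rfl⟩ | h) | h) | h)
    · exact (mem_TT_shift h.1).2 h
    · exact h.1
    · exact h.1
    · exact h.1

theorem E_disj {x y : CPart} (hxy : x ≠ y) {r s t : ℕ} {π : List CPart} (h : π ∈ E x r s t) :
    π ∉ E y r s t := by
  intro h2
  exact hxy (Option.mem_unique h.2 h2.2)

theorem shift_disj {x : CPart} (hx : ¬ Val2 x) {r s t : ℕ} {π : List CPart}
    (h : π ∈ shift '' TT r s t) : π ∉ E x r s t := by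
  intro h2
  obtain ⟨ρ, h, rfl⟩ := h
  obtain ⟨z, hz, rfl⟩ := mem_getLast_shift h2.2
  have := val_last h.1 hz
  apply hx
  simp only [Val, Val2] at this ⊢
  exact ⟨by omega, fun h => by have := this.2 h; omega⟩

theorem gf_decomp (r s t : ℕ) : gf wt (TT r s t) =
    X ^ (r + s + t) * gf wt (TT r s t) + gf wt (E (PColor.a, 1) r s t) +
    gf wt (E (PColor.b, 1) r s t) + gf wt (E (PColor.ab, 2) r s t) := by
  have hs : LF wt (shift '' TT r s t) := by
    refine (lf_TT r s t).mono ?_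
    rintro _ ⟨ρ, h, rfl⟩
    exact (mem_TT_shift h.1).2 h
  have hun : ∀ {A B : Set (List CPart)}, LF wt A → LF wt B → LF wt (A ∪ B) := by
    intro A B hA hB n
    refine ((hA n).union (hB n)).subset ?_
    rintro x ⟨h | h, h2⟩
    · exact Or.inl ⟨h, h2⟩
    · exact Or.inr ⟨h, h2⟩
  conv_lhs => rw [TT_decomp]
  rw [gf_union (hun (hun hs (lf_E _ _ _ _)) (lf_E _ _ _ _)) (lf_E _ _ _ _),
    gf_union (hun hs (lf_E _ _ _ _)) (lf_E _ _ _ _), gf_union hs (lf_E _ _ _ _), gf_shift]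
  · intro π h; exact shift_disj (by simp [Val2]) h
  · rintro π (h | h)
    · exact shift_disj (by simp [Val2]) h
    · exact E_disj (by simp) h
  · rintro π ((h | h) | h)
    · exact shift_disj (by simp [Val2]) h
    · exact E_disj (by simp) h
    · exact E_disj (by simp) h

theorem E_zero {c : PColor} {m r s t : ℕ}
    (h : ∀ π ∈ TT r s t, colorCount c π = 0) : E (c, m) r s t = ∅ := by
  ext π
  simp only [Set.mem_empty_iff_false, iff_false]
  rintro ⟨h1, h2⟩
  obtain ⟨l, rfl⟩ := List.getLast?_eq_some_iff.1 h2
  have := h _ h1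
  rw [colorCount_concat] at this
  simp at this

theorem concat_inj (x : CPart) : Function.Injective fun ρ : List CPart => ρ ++ [x] :=
  List.append_left_injective [x]

theorem gf_Ea (r s t : ℕ) : gf wt (E (PColor.a, 1) (r + 1) s t) =
    X ^ (r + s + t + 1) * gf wt (TT r s t) := by
  have : E (PColor.a, 1) (r + 1) s t = (fun ρ => shift ρ ++ [(PColor.a, 1)]) '' TT r s t := by
    ext π
    constructor
    · rintro ⟨⟨h, h1, h2, h3⟩, h4⟩
      obtain ⟨l, rfl⟩ := List.getLast?_eq_some_iff.1 h4
      rw [isType1_concat] at h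
      obtain ⟨ρ, hρ, rfl⟩ := exists_shift h.1 (by
        intro y hy
        have := h.2.2 y hy
        simp only [R, Val2] at this ⊢
        exact ⟨by omega, fun h => this.2 (Or.inl h)⟩)
      simp only [colorCount_concat, colorCount_shift] at h1 h2 h3
      simp at h1 h2 h3
      exact ⟨ρ, ⟨hρ, h1, h2, h3⟩, rfl⟩
    · rintro ⟨ρ, ⟨hρ, h1, h2, h3⟩, rfl⟩
      refine ⟨⟨?_, ?_⟩, by simp⟩
      · simp only
        rw [isType1_concat]
        refine ⟨isType1_shift hρ, by simp [Val], ?_⟩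
        intro y hy
        obtain ⟨z, hz, rfl⟩ := mem_getLast_shift hy
        have := val_last hρ hz
        simp only [R, Val] at this ⊢
        simp
        exact this
      · simp only [colorCount_concat, colorCount_shift]
        simp [h1, h2, h3]
  rw [this]
  refine gf_image _ _ ((concat_inj _).comp shift_inj) ?_
  intro x hx
  rw [wt_concat, wt_shift, length_TT hx]
  ring

theorem gf_Eb (r s t : ℕ) : gf wt (E (PColor.b, 1) r (s + 1) t) =
    X ^ (r + s + t + 1) * (gf wt (TT r s t) - gf wt (E (PColor.a, 1) r s t)) := by
  have hG : gf wt (TT r s t) - gf wt (E (PColor.a, 1) r s t) =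
      gf wt (TT r s t \ E (PColor.a, 1) r s t) := by
    rw [sub_eq_iff_eq_add, ← gf_union ((lf_TT r s t).mono Set.sdiff_subset) (lf_E _ _ _ _)
      (fun x hx => hx.2), Set.sdiff_union_of_subset (fun x hx => hx.1)]
  rw [hG]
  have : E (PColor.b, 1) r (s + 1) t =
      (fun ρ => shift ρ ++ [(PColor.b, 1)]) '' (TT r s t \ E (PColor.a, 1) r s t) := by
    ext π
    constructor
    · rintro ⟨⟨h, h1, h2, h3⟩, h4⟩
      obtain ⟨l, rfl⟩ := List.getLast?_eq_some_iff.1 h4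
      rw [isType1_concat] at h
      obtain ⟨ρ, hρ, rfl⟩ := exists_shift h.1 (by
        intro y hy
        have := h.2.2 y hy
        simp only [R, Val2] at this ⊢
        exact ⟨by omega, fun h => this.2 (Or.inl h)⟩)
      simp only [colorCount_concat, colorCount_shift] at h1 h2 h3
      simp at h1 h2 h3
      refine ⟨ρ, ⟨⟨hρ, h1, h2, h3⟩, ?_⟩, rfl⟩
      rintro ⟨_, h5⟩
      have := h.2.2 _ (getLast_shift h5)
      simp [R] at this
    · rintro ⟨ρ, ⟨⟨hρ, h1, h2, h3⟩, hne⟩, rfl⟩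
      refine ⟨⟨?_, ?_⟩, by simp⟩
      · simp only
        rw [isType1_concat]
        refine ⟨isType1_shift hρ, by simp [Val], ?_⟩
        intro y hy
        obtain ⟨⟨c, m⟩, hz, rfl⟩ := mem_getLast_shift hy
        have := val_last hρ hz
        have hm : c = PColor.a → m ≠ 1 := by
          rintro rfl rfl
          exact hne ⟨⟨hρ, h1, h2, h3⟩, hz⟩
        simp only [R, Val] at this ⊢
        cases c <;> simp at this hm ⊢ <;> omega
      · simp only [colorCount_concat, colorCount_shift]
        simp [h1, h2, h3]
  rw [this]
  refine gf_image _ _ ((concat_inj _).comp shift_inj) ?_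
  intro x hx
  rw [wt_concat, wt_shift, length_TT hx.1]
  ring

theorem gf_Eab (r s t : ℕ) : gf wt (E (PColor.ab, 2) r s (t + 1)) =
    X ^ (2 * (r + s + t + 1)) * gf wt (TT r s t) := by
  have : E (PColor.ab, 2) r s (t + 1) =
      (fun ρ => shift (shift ρ) ++ [(PColor.ab, 2)]) '' TT r s t := by
    ext π
    constructor
    · rintro ⟨⟨h, h1, h2, h3⟩, h4⟩
      obtain ⟨l, rfl⟩ := List.getLast?_eq_some_iff.1 h4
      rw [isType1_concat] at h
      obtain ⟨ρ, hρ, rfl⟩ := exists_shift h.1 (by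
        intro y hy
        have := h.2.2 y hy
        simp only [R, Val2] at this ⊢
        exact ⟨by omega, fun h => by have := this.2 (Or.inl h); omega⟩)
      obtain ⟨ρ', hρ', rfl⟩ := exists_shift hρ (by
        intro y hy
        have := h.2.2 _ (getLast_shift hy)
        simp only [R, Val2] at this ⊢
        exact ⟨by omega, fun h => by have := this.2 (Or.inl h); omega⟩)
      simp only [colorCount_concat, colorCount_shift] at h1 h2 h3
      simp at h1 h2 h3
      exact ⟨ρ', ⟨hρ', h1, h2, h3⟩, rfl⟩
    · rintro ⟨ρ, ⟨hρ, h1, h2, h3⟩, rfl⟩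
      refine ⟨⟨?_, ?_⟩, by simp⟩
      · simp only
        rw [isType1_concat]
        refine ⟨isType1_shift (isType1_shift hρ), by simp [Val], ?_⟩
        intro y hy
        obtain ⟨z, hz, rfl⟩ := mem_getLast_shift hy
        obtain ⟨z', hz', rfl⟩ := mem_getLast_shift hz
        have := val_last hρ hz'
        simp only [R, Val] at this ⊢
        simp
        exact this
      · simp only [colorCount_concat, colorCount_shift]
        simp [h1, h2, h3]
  rw [this]
  refine gf_image _ _ ((concat_inj _).comp (shift_inj.comp shift_inj)) ?_
  intro x hx
  rw [wt_concat, wt_shift, wt_shift, length_shift, length_TT hx]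
  ring

/-! ### Closed forms -/

/-- Triangular numbers. -/
def tri : ℕ → ℕ
  | 0 => 0
  | n + 1 => tri n + (n + 1)

theorem tri_add (m n : ℕ) : tri (m + n) = tri m + tri n + m * n := by
  induction n with
  | zero => simp [tri]
  | succ n ih => rw [← add_assoc, tri, ih, tri]; ring

/-- The finite product `(1-q)(1-q^2)...(1-q^n)`. -/
noncomputable def Q : ℕ → PowerSeries ℤ
  | 0 => 1
  | n + 1 => Q n * (1 - X ^ (n + 1))

theorem one_sub_ne {n : ℕ} (hn : 0 < n) : (1 - X ^ n : PowerSeries ℤ) ≠ 0 := by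
  intro h
  have := congrArg (coeff (R := ℤ) 0) h
  simp [hn.ne'] at this

theorem Q_ne (n : ℕ) : Q n ≠ 0 := by
  induction n with
  | zero => simp [Q]
  | succ n ih => exact mul_ne_zero ih (one_sub_ne (Nat.succ_pos n))

theorem Q_unit (n : ℕ) : ∃ u, Q n * u = 1 := by
  have : IsUnit (Q n) := by
    rw [PowerSeries.isUnit_iff_constantCoeff]
    induction n with
    | zero => simp [Q]
    | succ n ih => simpa [Q] using ih
  exact this.exists_right_inv

/-- Inverse of `Q n`. -/
noncomputable def u (n : ℕ) : PowerSeries ℤ := (Q_unit n).choose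

theorem Q_mul_u (n : ℕ) : Q n * u n = 1 := (Q_unit n).choose_spec

theorem u_zero : u 0 = 1 := by simpa [Q] using Q_mul_u 0

theorem u_succ (n : ℕ) : (1 - X ^ (n + 1)) * u (n + 1) = u n := by
  apply mul_left_cancel₀ (Q_ne n)
  rw [Q_mul_u, ← mul_assoc]
  exact Q_mul_u (n + 1)

theorem gf_TT_zero : gf wt (TT 0 0 0) = 1 := by
  have : TT 0 0 0 = {[]} := by
    ext π
    constructor
    · intro h
      have := length_TT h
      simpa using this
    · rintro rfl
      exact ⟨isType1_nil, rfl, rfl, rfl⟩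
  rw [this]
  ext n
  simp only [gf, coeff_mk, coeff_one]
  split_ifs with h
  · have : {x : List CPart | x ∈ ({[]} : Set (List CPart)) ∧ wt x = n} = {[]} := by
      ext x
      simp only [Set.mem_singleton_iff, Set.mem_ofPred_eq]
      constructor
      · exact fun h => h.1
      · rintro rfl; exact ⟨rfl, h.symm⟩
    rw [this]; simp
  · have : {x : List CPart | x ∈ ({[]} : Set (List CPart)) ∧ wt x = n} = ∅ := by
      ext x
      simp only [Set.mem_singleton_iff, Set.mem_ofPred_eq, Set.mem_empty_iff_false, iff_false]
      rintro ⟨rfl, h2⟩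
      exact h h2.symm
    rw [this]; simp

theorem gf_TT_aux (N : ℕ) : ∀ r s t, r + s + t = N →
    gf wt (TT r s t) * (Q r * Q s * Q t) = X ^ (tri N + tri t) := by
  induction N using Nat.strong_induction_on with
  | h N ihs =>
  cases N with
  | zero =>
    intro r s t h
    obtain ⟨rfl, rfl, rfl⟩ : r = 0 ∧ s = 0 ∧ t = 0 := by omega
    rw [gf_TT_zero]
    simp [Q, tri]
  | succ N =>
    have ih := ihs N (by omega)
    intro r s t h
    have ha : gf wt (E (PColor.a, 1) r s t) * (Q r * Q s * Q t) =
        (1 - X ^ r) * X ^ (tri (N + 1) + tri t) := by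
      cases r with
      | zero => rw [E_zero fun π hπ => hπ.2.1, gf_empty]; simp
      | succ r =>
        have := ih r s t (by omega)
        rw [gf_Ea, show r + s + t = N by omega, Q, tri]
        linear_combination X ^ (N + 1) * (1 - X ^ (r + 1)) * this
    have hb : gf wt (E (PColor.b, 1) r s t) * (Q r * Q s * Q t) =
        (1 - X ^ s) * X ^ r * X ^ (tri (N + 1) + tri t) := by
      cases s with
      | zero => rw [E_zero fun π hπ => hπ.2.2.1, gf_empty]; simp
      | succ s =>
        have h1 := ih r s t (by omega)
        have h2 : gf wt (E (PColor.a, 1) r s t) * (Q r * Q s * Q t) =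
            (1 - X ^ r) * X ^ (tri N + tri t) := by
          cases r with
          | zero => rw [E_zero fun π hπ => hπ.2.1, gf_empty]; simp
          | succ r =>
            cases N with
            | zero => omega
            | succ N =>
              have h3 := ihs N (by omega) r s t (by omega)
              rw [gf_Ea, show r + s + t = N by omega, Q, tri]
              linear_combination X ^ (N + 1) * (1 - X ^ (r + 1)) * h3
        rw [gf_Eb, show r + s + t = N by omega, Q, tri]
        linear_combination X ^ (N + 1) * (1 - X ^ (s + 1)) * (h1 - h2)
    have hab : gf wt (E (PColor.ab, 2) r s t) * (Q r * Q s * Q t) =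
        (1 - X ^ t) * X ^ (r + s) * X ^ (tri (N + 1) + tri t) := by
      cases t with
      | zero => rw [E_zero fun π hπ => hπ.2.2.2, gf_empty]; simp
      | succ t =>
        have := ih r s t (by omega)
        rw [gf_Eab, show r + s + t = N by omega, Q, tri, tri]
        have hN : N = r + s + t := by omega
        subst hN
        linear_combination X ^ (2 * (r + s + t + 1)) * (1 - X ^ (t + 1)) * this
    have hd := gf_decomp r s t
    apply mul_left_cancel₀ (one_sub_ne (Nat.succ_pos N))
    rw [h] at hd
    have hp : (X : PowerSeries ℤ) ^ (N + 1) = X ^ r * X ^ s * X ^ t := by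
      rw [← h]; ring
    have h0 : (X : PowerSeries ℤ) ^ (r + s) = X ^ r * X ^ s := by ring
    rw [h0] at hab
    rw [Nat.succ_eq_add_one]
    linear_combination (Q r * Q s * Q t) * hd + ha + hb + hab +
      X ^ (tri (N + 1) + tri t) * hp

theorem gf_TT (r s t : ℕ) :
    gf wt (TT r s t) = X ^ (tri (r + s + t) + tri t) * (u r * u s * u t) := by
  have h := gf_TT_aux _ r s t rfl
  linear_combination (u r * u s * u t) * h - gf wt (TT r s t) *
    (Q_mul_u r * (Q s * u s * (Q t * u t)) + Q_mul_u s * (Q t * u t) + Q_mul_u t)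

/-! ### The key identity -/

/-- Left side of the key identity. -/
noncomputable def h (i j : ℕ) : PowerSeries ℤ :=
  ∑ t ∈ Finset.range (i + 1),
    if t ≤ j then X ^ ((i - t) * (j - t)) * (u (i - t) * u (j - t) * u t) else 0

theorem h_rec (i j : ℕ) : (1 - X ^ (i + 1)) * h (i + 1) j =
    (if j = 0 then 0 else h i (j - 1)) + X ^ j * h i j := by
  have e1 : (if j = 0 then 0 else h i (j - 1)) = ∑ t ∈ Finset.range (i + 2),
      if t ≤ j then X ^ ((i + 1 - t) * (j - t)) *
        (u (i + 1 - t) * u (j - t) * ((1 - X ^ t) * u t)) else 0 := by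
    rw [Finset.sum_range_succ']
    simp only [pow_zero, sub_self, zero_mul, mul_zero, ite_self, add_zero]
    split_ifs with hj
    · subst hj; simp
    · rw [h]
      refine Finset.sum_congr rfl fun t _ => ?_
      rw [u_succ, show i + 1 - (t + 1) = i - t by omega, show j - (t + 1) = j - 1 - t by omega]
      exact if_congr (by omega) rfl rfl
  have e2 : X ^ j * h i j = ∑ t ∈ Finset.range (i + 2),
      if t ≤ j then X ^ ((i + 1 - t) * (j - t)) *
        (X ^ t * ((1 - X ^ (i + 1 - t)) * u (i + 1 - t)) * u (j - t) * u t) else 0 := by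
    rw [Finset.sum_range_succ, h, Finset.mul_sum]
    simp only [Nat.sub_self, pow_zero, sub_self, zero_mul, mul_zero, ite_self, add_zero]
    refine Finset.sum_congr rfl fun t ht => ?_
    have ht : t ≤ i := by simpa [Nat.lt_succ_iff] using ht
    obtain ⟨r, rfl⟩ := Nat.exists_eq_add_of_le ht
    rw [show t + r + 1 - t = r + 1 by omega, u_succ, show t + r - t = r by omega]
    split_ifs with hj
    · obtain ⟨s, rfl⟩ := Nat.exists_eq_add_of_le hj
      rw [show t + s - t = s by omega]
      ring
    · simp
  rw [e1, e2, ← Finset.sum_add_distrib, h, Finset.mul_sum]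
  refine Finset.sum_congr rfl fun t ht => ?_
  have ht : t ≤ i + 1 := by simpa [Nat.lt_succ_iff] using ht
  have hp : (X : PowerSeries ℤ) ^ (i + 1) = X ^ t * X ^ (i + 1 - t) := by
    rw [← pow_add]; congr 1; omega
  split_ifs with hj
  · rw [hp]; ring
  · simp

theorem h_eq (i : ℕ) : ∀ j, h i j = u i * u j := by
  induction i with
  | zero => intro j; simp [h, u_zero]
  | succ i ih =>
    intro j
    apply mul_left_cancel₀ (one_sub_ne (Nat.succ_pos i))
    rw [Nat.succ_eq_add_one, h_rec, ← mul_assoc, u_succ, ih]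
    cases j with
    | zero => simp [ih]
    | succ j =>
      simp only [Nat.succ_ne_zero, if_false, Nat.add_sub_cancel]
      rw [ih, ← u_succ j]
      ring

/-! ### Pairs of distinct partitions -/

/-- Partitions into `i` distinct parts. -/
def D (i : ℕ) : Set (List ℕ) := {l | l.Chain' (· > ·) ∧ (∀ x ∈ l, 0 < x) ∧ l.length = i}

theorem count_all (c : PColor) (l : List CPart) :
    (∀ p ∈ l, p.1 = c) ↔ colorCount c l = l.length := by
  simp [colorCount, List.length_filter_eq_length_iff]

theorem D_image (i : ℕ) : (List.map fun m => ((PColor.a, m) : CPart)) '' D i = TT i 0 0 := by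
  ext π
  constructor
  · rintro ⟨l, ⟨h1, h2, h3⟩, rfl⟩
    have hc : colorCount PColor.a (l.map fun m => ((PColor.a, m) : CPart)) = i := by
      rw [(count_all _ _).1 (by simp)]; simpa using h3
    have hl := length_eq (l.map fun m => ((PColor.a, m) : CPart))
    simp only [List.length_map, h3, hc] at hl
    refine ⟨?_, hc, by omega, by omega⟩
    rw [isType1_iff]
    constructor
    · intro p hp
      obtain ⟨m, hm, rfl⟩ := List.mem_map.1 hp
      exact ⟨h2 m hm, by simp⟩
    · rw [List.isChain_map]
      refine List.IsChain.imp ?_ h1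
      intro x y hxy
      exact ⟨hxy, by simp⟩
  · intro hπ
    have hall := (count_all PColor.a π).2 (by rw [length_TT hπ, hπ.2.1]; rfl)
    have hm : π = (π.map Prod.snd).map fun m => ((PColor.a, m) : CPart) := by
      rw [List.map_map]
      conv_lhs => rw [← List.map_id π]
      apply List.map_congr_left
      rintro ⟨c, m⟩ hp
      have := hall _ hp
      simp at this ⊢
      exact this
    refine ⟨π.map Prod.snd, ⟨?_, ?_, ?_⟩, hm.symm⟩
    · have h2 := ((isType1_iff π).1 hπ.1).2
      show List.IsChain _ _
      rw [List.isChain_map]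
      refine h2.imp ?_
      intro x y hxy
      exact hxy.1
    · intro x hx
      obtain ⟨p, hp, rfl⟩ := List.mem_map.1 hx
      exact (hπ.1.1 p hp).1
    · rw [List.length_map, length_TT hπ]; rfl

theorem map_a_inj : Function.Injective (List.map fun m => ((PColor.a, m) : CPart)) := by
  apply List.map_injective_iff.2
  intro x y hxy
  simpa using hxy

theorem wt_map_a (l : List ℕ) : wt (l.map fun m => ((PColor.a, m) : CPart)) = l.sum := by
  simp [wt, Function.comp_def]

theorem gf_D (i : ℕ) : gf List.sum (D i) = X ^ tri i * u i := by
  have h1 := gf_image (w := List.sum) (w' := wt) (A := D i) _ 0 map_a_inj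
    (fun l _ => by rw [wt_map_a]; rfl)
  rw [D_image, gf_TT] at h1
  simpa [tri, u_zero] using h1.symm

theorem lf_D (i : ℕ) : LF List.sum (D i) := by
  intro n
  refine Set.Finite.of_finite_image (f := List.map fun m => ((PColor.a, m) : CPart)) ?_
    map_a_inj.injOn
  refine (lf_TT i 0 0 n).subset ?_
  rintro _ ⟨l, ⟨h1, h2⟩, rfl⟩
  refine ⟨?_, by rw [wt_map_a, h2]⟩
  rw [← D_image]
  exact ⟨l, h1, rfl⟩

theorem V_eq (n i j : ℕ) : (V n i j : ℤ) = coeff n (X ^ (tri i + tri j) * (u i * u j)) := by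
  have h1 := gf_prod (lf_D i) (lf_D j)
  rw [gf_D, gf_D] at h1
  rw [show X ^ (tri i + tri j) * (u i * u j) = X ^ tri i * u i * (X ^ tri j * u j) by ring, ← h1]
  simp only [gf, coeff_mk, V]
  congr 2
  ext p
  simp only [Set.mem_ofPred_eq, Set.mem_prod, D]
  tauto

theorem S_eq (n r s t : ℕ) : (S n r s t : ℤ) = coeff n (gf wt (TT r s t)) := by
  simp only [gf, coeff_mk, S]
  congr 2
  ext p
  simp only [Set.mem_ofPred_eq, TT]
  tauto

theorem sum_S (n i j : ℕ) : (V n i j : ℤ) = ∑ t ∈ Finset.range (i + 1),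
    if t ≤ j then (S n (i - t) (j - t) t : ℤ) else 0 := by
  rw [V_eq, ← h_eq, h, Finset.mul_sum, map_sum]
  refine Finset.sum_congr rfl fun t ht => ?_
  have ht : t ≤ i := by simpa [Nat.lt_succ_iff] using ht
  split_ifs with hj
  · rw [S_eq, gf_TT, ← mul_assoc, ← pow_add]
    obtain ⟨r, rfl⟩ := Nat.exists_eq_add_of_le ht
    obtain ⟨s, rfl⟩ := Nat.exists_eq_add_of_le hj
    simp only [Nat.add_sub_cancel_left]
    congr 3
    simp only [tri_add]
    ring
  · simp

theorem finsum_range (f : ℕ → ℕ) (m : ℕ) (hf : ∀ k, m < k → f k = 0) :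
    ∑ᶠ k, f k = ∑ k ∈ Finset.range (m + 1), f k := by
  apply finsum_eq_sum_of_support_subset
  intro k hk
  simp only [Finset.coe_range, Set.mem_Iio]
  by_contra hlt
  exact hk (hf k (by omega))

theorem finsum_S (n i j : ℕ) : (∑ᶠ (r : ℕ) (s : ℕ) (t : ℕ),
      (if r + t = i ∧ s + t = j then S n r s t else 0)) = ∑ t ∈ Finset.range (i + 1),
    if t ≤ j then S n (i - t) (j - t) t else 0 := by
  have e1 : ∀ r s, (∑ᶠ t, (if r + t = i ∧ s + t = j then S n r s t else 0)) =
      ∑ t ∈ Finset.range (i + 1), (if r + t = i ∧ s + t = j then S n r s t else 0) :=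
    fun r s => finsum_range _ _ fun k hk => if_neg (by omega)
  simp only [e1]
  have e2 : ∀ r, (∑ᶠ s, ∑ t ∈ Finset.range (i + 1),
        (if r + t = i ∧ s + t = j then S n r s t else 0)) =
      ∑ s ∈ Finset.range (j + 1), ∑ t ∈ Finset.range (i + 1),
        (if r + t = i ∧ s + t = j then S n r s t else 0) :=
    fun r => finsum_range _ _ fun k hk => Finset.sum_eq_zero fun t _ => if_neg (by omega)
  simp only [e2]
  rw [finsum_range _ i fun k hk => Finset.sum_eq_zero fun s _ =>
    Finset.sum_eq_zero fun t _ => if_neg (by omega)]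
  have e3 : ∀ r, (∑ s ∈ Finset.range (j + 1), ∑ t ∈ Finset.range (i + 1),
        (if r + t = i ∧ s + t = j then S n r s t else 0)) =
      ∑ t ∈ Finset.range (i + 1), ∑ s ∈ Finset.range (j + 1),
        (if r + t = i ∧ s + t = j then S n r s t else 0) := fun r => Finset.sum_comm
  simp only [e3]
  rw [Finset.sum_comm]
  refine Finset.sum_congr rfl fun t ht => ?_
  have ht : t ≤ i := by simpa [Nat.lt_succ_iff] using ht
  rw [Finset.sum_eq_single (i - t)]
  · split_ifs with hj
    · rw [Finset.sum_eq_single (j - t)]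
      · exact if_pos (by omega)
      · intro s _ hs; exact if_neg (by omega)
      · intro hs; simp at hs
    · exact Finset.sum_eq_zero fun s _ => if_neg (by omega)
  · intro r _ hr
    exact Finset.sum_eq_zero fun s _ => if_neg (by omega)
  · intro hs; simp at hs

end AG

/-- Theorem 1 (Alladi–Gordon): `V(n; i, j) = ∑_{r+t=i, s+t=j} S(n; r, s, t)`. -/
theorem alladi_gordon_refined_schur (n i j : ℕ) :
    V n i j = ∑ᶠ (r : ℕ) (s : ℕ) (t : ℕ),
      (if r + t = i ∧ s + t = j then S n r s t else 0) := by
  rw [AG.finsum_S]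
  have h := AG.sum_S n i j
  exact_mod_cast h
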